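/- Let u : S¹ → ℝ be smooth with Fourier coefficients c_n vanishing for n ∈ {−1, 0, 1}, and let G be the function whose k-th Fourier coefficient, for |k| ≥ 2, equals (−i·sgn k)/(1 − k²) times the k-th Fourier coefficient of 2 u′·H(u′) − u″·H(u″), and whose Fourier modes with |k| ≤ 1 vanish (i.e. G = H (1+∂_θ²)^{−1}[2 u_θ H u_θ − u_θθ H u_θθ]). Then sup_θ |G(θ)| ≤ 8π ∫_{S¹} u·H(u′) dθ + 4π ∫_{S¹} (Hu)·(u‴ + u′) dθ. -/

import Mathlib

open MeasureTheory Real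

/-- The `n`-th Fourier coefficient of a `2π`-periodic function `f : ℝ → ℝ`. -/
noncomputable def fourierC (f : ℝ → ℝ) (n : ℤ) : ℂ :=
  (1 / (2 * π)) * ∫ θ in (0:ℝ)..(2 * π), (f θ : ℂ) * Complex.exp (-Complex.I * (n : ℂ) * (θ : ℂ))

/-- The Hilbert transform on the circle, sending `Σ cₙ e^{inθ}` to `Σ (−i sgn n) cₙ e^{inθ}`. -/
noncomputable def hilbertT (f : ℝ → ℝ) (θ : ℝ) : ℝ :=
  (∑' n : ℤ, -Complex.I * ((n.sign : ℤ) : ℂ) * fourierC f n *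
    Complex.exp (Complex.I * (n : ℂ) * (θ : ℂ))).re

/-!
After symmetrization in `m + n = k`, the pair of modes `m`, `n` of `u` enters the `k`-th mode of
`2u′Hu′ − u″Hu″` with the factor `i (sgn m + sgn n) · mn (2 + mn)`. It vanishes unless `m` and `n`
have the same sign, and then `|m|, |n| < |k|`. Since `k² − 1 ≥ ¾ k²`, the inequality between the
arithmetic and geometric means gives `|Ĝ_k| ≤ Σ_{|n| < |k|} 4 n⁴ |c_n|² / k²`. Summing over `k` with
`Σ_{|k| > |n|} k⁻² ≤ 4 / (|n| + 1)` yields `Σ_k |Ĝ_k| ≤ 16 Σ_n |n|³ |c_n|²`, whereas the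
combination of seminorms bounding `G` equals `8π² Σ_n (|n|³ + |n|) |c_n|²`.
-/

section FourierCoefficients

variable {f g : ℝ → ℝ}

lemma norm_exp_I_mul_intCast_mul (n : ℤ) (θ : ℝ) :
    ‖Complex.exp (Complex.I * (n : ℂ) * (θ : ℂ))‖ = 1 := by
  simp [Complex.norm_exp]

lemma fourier_coe_two_pi (n : ℤ) (x : ℝ) :
    (fourier n (x : AddCircle (2 * π)) : ℂ) = Complex.exp (Complex.I * n * x) := by
  have hpi : (π : ℂ) ≠ 0 := by exact_mod_cast pi_ne_zero
  rw [fourier_coe_apply]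
  congr 1
  push_cast
  field_simp

lemma fourierC_eq_integral_fourier (f : ℝ → ℝ) (n : ℤ) :
    fourierC f n =
      (1 / (2 * π) : ℝ) •
        ∫ x in (0:ℝ)..(2 * π), fourier (-n) (x : AddCircle (2 * π)) • (f x : ℂ) := by
  simp only [fourierC, fourier_coe_two_pi, smul_eq_mul, Complex.real_smul, mul_comm (Complex.exp _)]
  simp

lemma fourierC_eq_fourierCoeffOn (f : ℝ → ℝ) (n : ℤ) :
    fourierC f n = fourierCoeffOn two_pi_pos (fun x => (f x : ℂ)) n := by
  rw [fourierCoeffOn_eq_integral, fourierC_eq_integral_fourier, sub_zero]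

lemma fourierC_neg (f : ℝ → ℝ) (n : ℤ) :
    fourierC f (-n) = (starRingEnd ℂ) (fourierC f n) := by
  simp only [fourierC, intervalIntegral.integral_of_le two_pi_pos.le, map_mul, ← integral_conj,
    ← Complex.exp_conj]
  simp [map_ofNat]

lemma fourierC_mul_fourierC_neg (f : ℝ → ℝ) (n : ℤ) :
    fourierC f n * fourierC f (-n) = ((‖fourierC f n‖ ^ 2 : ℝ) : ℂ) := by
  rw [fourierC_neg, Complex.mul_conj, Complex.normSq_eq_norm_sq]

lemma fourierC_zero (f : ℝ → ℝ) :
    fourierC f 0 = (((∫ x in (0:ℝ)..(2 * π), f x) / (2 * π) : ℝ) : ℂ) := by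
  simp [fourierC, div_eq_inv_mul, ← intervalIntegral.integral_ofReal]

lemma intervalIntegrable_mul_cexp {a b : ℝ} (hf : IntervalIntegrable f volume a b) (n : ℤ) :
    IntervalIntegrable (fun θ : ℝ => (f θ : ℂ) * Complex.exp (-Complex.I * (n : ℂ) * (θ : ℂ)))
      volume a b :=
  have hfc : IntervalIntegrable (fun θ => (f θ : ℂ)) volume a b := ⟨hf.1.ofReal, hf.2.ofReal⟩
  hfc.mul_continuousOn (by fun_prop)

lemma fourierC_add (hf : IntervalIntegrable f volume 0 (2 * π))
    (hg : IntervalIntegrable g volume 0 (2 * π)) (n : ℤ) :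
    fourierC (fun θ => f θ + g θ) n = fourierC f n + fourierC g n := by
  simp only [fourierC, Complex.ofReal_add, add_mul]
  rw [intervalIntegral.integral_add (intervalIntegrable_mul_cexp hf n)
    (intervalIntegrable_mul_cexp hg n), mul_add]

lemma fourierC_const_mul (a : ℝ) (f : ℝ → ℝ) (n : ℤ) :
    fourierC (fun θ => a * f θ) n = a * fourierC f n := by
  simp only [fourierC, Complex.ofReal_mul, mul_assoc, intervalIntegral.integral_const_mul]
  ring

lemma fourierC_sub (hf : IntervalIntegrable f volume 0 (2 * π))
    (hg : IntervalIntegrable g volume 0 (2 * π)) (n : ℤ) :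
    fourierC (fun θ => f θ - g θ) n = fourierC f n - fourierC g n := by
  simp only [fourierC, Complex.ofReal_sub, sub_mul]
  rw [intervalIntegral.integral_sub (intervalIntegrable_mul_cexp hf n)
    (intervalIntegrable_mul_cexp hg n), mul_sub]

lemma periodic_deriv {c : ℝ} (hper : Function.Periodic f c) : Function.Periodic (deriv f) c := by
  intro θ
  rw [← deriv_comp_add_const, hper.funext]

lemma fourierC_deriv (hf : ContDiff ℝ 1 f) (hper : Function.Periodic f (2 * π)) (n : ℤ) :
    fourierC (deriv f) n = Complex.I * n * fourierC f n := by
  have hderiv (x : ℝ) : HasDerivAt f (deriv f x) x :=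
    (hf.differentiable one_ne_zero x).hasDerivAt
  have hint : IntervalIntegrable (deriv f) volume 0 (2 * π) :=
    hf.continuous_deriv_one.intervalIntegrable _ _
  have hends : f (2 * π) = f 0 := by simpa using hper 0
  rcases eq_or_ne n 0 with rfl | hn
  · rw [fourierC_zero, intervalIntegral.integral_eq_sub_of_hasDerivAt (fun x _ => hderiv x) hint]
    simp [hends]
  · have hparts := fourierCoeffOn_of_hasDerivAt two_pi_pos hn
      (fun x _ => (hderiv x).ofReal_comp) ⟨hint.1.ofReal, hint.2.ofReal⟩
    rw [← fourierC_eq_fourierCoeffOn, ← fourierC_eq_fourierCoeffOn, hends] at hparts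
    have hpi : (π : ℂ) ≠ 0 := by exact_mod_cast pi_ne_zero
    have hn' : (n : ℂ) ≠ 0 := by exact_mod_cast hn
    rw [hparts]
    push_cast
    field_simp
    ring

lemma summable_norm_sq_fourierC (hf : Continuous f) : Summable fun n => ‖fourierC f n‖ ^ 2 := by
  simp only [fourierC_eq_fourierCoeffOn]
  have hfc : Continuous fun x => (f x : ℂ) := Complex.continuous_ofReal.comp hf
  exact (hasSum_sq_fourierCoeffOn two_pi_pos <|
    (memLp_two_iff_integrable_sq_norm hfc.aestronglyMeasurable).mpr
      (hfc.norm.pow 2).integrableOn_Ioc).summable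

lemma summable_fourierC (hf : ContDiff ℝ 1 f) (hper : Function.Periodic f (2 * π)) :
    Summable (fourierC f) := by
  have hsq := summable_norm_sq_fourierC hf.continuous_deriv_one
  have hinv : Summable fun n : ℤ => 1 / (n : ℝ) ^ 2 :=
    Real.summable_one_div_int_pow.mpr one_lt_two
  refine .of_norm_bounded_eventually (hinv.add hsq) ?_
  filter_upwards [(Set.finite_singleton (0 : ℤ)).compl_mem_cofinite] with n hn
  have hn0 : (0 : ℝ) < |(n : ℝ)| := abs_pos.mpr (by exact_mod_cast hn)
  have hnorm : ‖fourierC f n‖ = 1 / |(n : ℝ)| * ‖fourierC (deriv f) n‖ := by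
    rw [fourierC_deriv hf hper, norm_mul, norm_mul, Complex.norm_I, Complex.norm_intCast]
    field_simp
  rw [hnorm, ← sq_abs (n : ℝ), ← one_div_pow]
  nlinarith [sq_nonneg (1 / |(n : ℝ)| - ‖fourierC (deriv f) n‖),
    sq_nonneg (1 / |(n : ℝ)|), sq_nonneg ‖fourierC (deriv f) n‖]

lemma enorm_le_tsum_enorm_fourierC (hf : Continuous f) (hper : Function.Periodic f (2 * π))
    (θ : ℝ) : ‖f θ‖ₑ ≤ ∑' n, ‖fourierC f n‖ₑ := by
  by_cases htop : ∑' n, ‖fourierC f n‖ₑ = ⊤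
  · simp [htop]
  have hsum : Summable (fourierC f) := .of_enorm htop
  have : Fact (0 < 2 * π) := ⟨two_pi_pos⟩
  have hper' : Function.Periodic (fun x => (f x : ℂ)) (2 * π) := fun x => by simp [hper x]
  let F : C(AddCircle (2 * π), ℂ) :=
    ⟨hper'.lift, continuous_coinduced_dom.mpr (Complex.continuous_ofReal.comp hf)⟩
  have hcoeff (n : ℤ) : fourierCoeff F n = fourierC f n := by
    rw [fourierCoeff_eq_intervalIntegral F n 0, fourierC_eq_integral_fourier, zero_add]
    rfl
  have hseries : HasSum (fun n => fourierC f n • fourier n (θ : AddCircle (2 * π))) (f θ : ℂ) := by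
    simp only [← hcoeff]
    exact has_pointwise_sum_fourier_series_of_summable (f := F)
      (by rwa [funext hcoeff]) (θ : AddCircle (2 * π))
  calc ‖f θ‖ₑ = ‖(f θ : ℂ)‖ₑ := by rw [← ofReal_norm, ← ofReal_norm, Complex.norm_real]
    _ ≤ ∑' n, ‖fourierC f n • fourier n (θ : AddCircle (2 * π))‖ₑ :=
      hseries.tsum_eq ▸ enorm_tsum_le_tsum_enorm
    _ = ∑' n, ‖fourierC f n‖ₑ := by
      congr 1 with n
      rw [enorm_smul, fourier_coe_two_pi, ← ofReal_norm (Complex.exp _),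
        norm_exp_I_mul_intCast_mul, ENNReal.ofReal_one, mul_one]

end FourierCoefficients

section HilbertTransform

variable {f g : ℝ → ℝ}

lemma norm_neg_I_mul_sign_le_one (n : ℤ) : ‖-Complex.I * ((n.sign : ℤ) : ℂ)‖ ≤ 1 := by
  rcases Int.sign_trichotomy n with h | h | h <;> simp [h]

lemma summable_hilbertT_coeff (hg : Summable (fourierC g)) :
    Summable fun n : ℤ => -Complex.I * ((n.sign : ℤ) : ℂ) * fourierC g n :=
  .of_norm_bounded hg.norm fun n => by
    rw [norm_mul]
    exact mul_le_of_le_one_left (norm_nonneg _) (norm_neg_I_mul_sign_le_one n)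

lemma summable_mul_cexp {a : ℤ → ℂ} (ha : Summable a) (θ : ℝ) :
    Summable fun n : ℤ => a n * Complex.exp (Complex.I * (n : ℂ) * (θ : ℂ)) :=
  .of_norm_bounded ha.norm fun n => by rw [norm_mul, norm_exp_I_mul_intCast_mul, mul_one]

-- The coefficients of a real function are conjugate under `n ↦ -n`, so the series is its own
-- conjugate and taking real parts in `hilbertT` loses nothing.
lemma coe_hilbertT (g : ℝ → ℝ) (θ : ℝ) :
    (hilbertT g θ : ℂ) = ∑' n : ℤ, -Complex.I * ((n.sign : ℤ) : ℂ) * fourierC g n *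
      Complex.exp (Complex.I * (n : ℂ) * (θ : ℂ)) := by
  unfold hilbertT
  apply Complex.conj_eq_iff_re.mp
  rw [Complex.conj_tsum, ← (Equiv.neg ℤ).tsum_eq]
  congr 1 with n
  simp [← Complex.exp_conj, fourierC_neg]

lemma hasSum_hilbertT (hg : Summable (fourierC g)) (θ : ℝ) :
    HasSum (fun n : ℤ => -Complex.I * ((n.sign : ℤ) : ℂ) * fourierC g n *
      Complex.exp (Complex.I * (n : ℂ) * (θ : ℂ))) (hilbertT g θ) :=
  coe_hilbertT g θ ▸ (summable_mul_cexp (summable_hilbertT_coeff hg) θ).hasSum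

lemma continuous_hilbertT (hg : Summable (fourierC g)) : Continuous (hilbertT g) :=
  Complex.continuous_re.comp <|
    continuous_tsum (fun n => by fun_prop) (summable_hilbertT_coeff hg).norm fun n θ => by
      rw [norm_mul, norm_exp_I_mul_intCast_mul, mul_one]

lemma hasSum_fourierC_mul {a : ℤ → ℂ} {h : ℝ → ℝ} (hf : IntervalIntegrable f volume 0 (2 * π))
    (ha : Summable a)
    (hah : ∀ θ : ℝ, HasSum (fun n : ℤ => a n * Complex.exp (Complex.I * (n : ℂ) * (θ : ℂ))) (h θ))
    (k : ℤ) :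
    HasSum (fun n : ℤ => a n * fourierC f (k - n)) (fourierC (fun θ => f θ * h θ) k) := by
  have hterm (n : ℤ) : a n * fourierC f (k - n) = (1 / (2 * π) : ℂ) * ∫ θ in (0:ℝ)..(2 * π),
      a n * ((f θ : ℂ) * Complex.exp (-Complex.I * ((k - n : ℤ) : ℂ) * (θ : ℂ))) := by
    rw [fourierC, intervalIntegral.integral_const_mul]
    ring
  rw [funext hterm]
  refine HasSum.mul_left _ (intervalIntegral.hasSum_integral_of_dominated_convergence
    (fun n θ => ‖a n‖ * |f θ|) (fun n => ?_) (fun n => ?_) ?_ ?_ ?_)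
  · exact ((intervalIntegrable_mul_cexp hf (k - n)).const_mul (a n)).def'.aestronglyMeasurable
  · refine .of_forall fun θ _ => le_of_eq ?_
    rw [norm_mul, norm_mul, Complex.norm_real, Real.norm_eq_abs, neg_mul, ← mul_neg,
      ← Int.cast_neg, norm_exp_I_mul_intCast_mul, mul_one]
  · exact .of_forall fun θ _ => ha.norm.mul_right _
  · simpa only [tsum_mul_right] using hf.abs.const_mul _
  · refine .of_forall fun θ _ => ?_
    convert! (hah θ).mul_left ((f θ : ℂ) * Complex.exp (-Complex.I * (k : ℂ) * (θ : ℂ))) using 1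
    · ext n
      have hexp : Complex.exp (-Complex.I * ((k - n : ℤ) : ℂ) * (θ : ℂ)) =
          Complex.exp (-Complex.I * (k : ℂ) * (θ : ℂ)) *
            Complex.exp (Complex.I * (n : ℂ) * (θ : ℂ)) := by
        rw [← Complex.exp_add]
        congr 1
        push_cast
        ring
      rw [hexp]
      ring
    · push_cast
      ring

lemma hasSum_fourierC_mul_hilbertT (hf : IntervalIntegrable f volume 0 (2 * π))
    (hg : Summable (fourierC g)) (k : ℤ) :
    HasSum (fun n : ℤ => -Complex.I * ((n.sign : ℤ) : ℂ) * fourierC g n * fourierC f (k - n))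
      (fourierC (fun θ => f θ * hilbertT g θ) k) :=
  hasSum_fourierC_mul hf (summable_hilbertT_coeff hg) (hasSum_hilbertT hg) k

end HilbertTransform

section Seminorms

variable {f g u : ℝ → ℝ}

lemma hasSum_integral_mul_hilbertT (hf : IntervalIntegrable f volume 0 (2 * π))
    (hg : Summable (fourierC g)) :
    HasSum (fun n : ℤ => -Complex.I * ((n.sign : ℤ) : ℂ) * fourierC g n * fourierC f (-n))
      (((∫ x in (0:ℝ)..(2 * π), f x * hilbertT g x) / (2 * π) : ℝ) : ℂ) := by
  simpa only [fourierC_zero, zero_sub] using hasSum_fourierC_mul_hilbertT hf hg 0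

lemma sign_mul_intCast_eq_abs (n : ℤ) : ((n.sign : ℤ) : ℂ) * (n : ℂ) = ((|(n : ℝ)| : ℝ) : ℂ) := by
  rw [← Int.cast_mul, Int.sign_mul_self_eq_abs, ← Int.cast_abs, Complex.ofReal_intCast]

lemma hasSum_abs_mul_norm_sq_fourierC (hu : ContDiff ℝ 2 u)
    (hper : Function.Periodic u (2 * π)) :
    HasSum (fun n : ℤ => |(n : ℝ)| * ‖fourierC u n‖ ^ 2)
      ((∫ x in (0:ℝ)..(2 * π), u x * hilbertT (deriv u) x) / (2 * π)) := by
  have hu' : ContDiff ℝ 1 (deriv u) := ContDiff.deriv' hu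
  rw [← Complex.hasSum_ofReal]
  convert! hasSum_integral_mul_hilbertT (hu.continuous.intervalIntegrable _ _)
    (summable_fourierC hu' (periodic_deriv hper)) using 1
  ext n
  rw [fourierC_deriv (hu.of_le one_le_two) hper, Complex.ofReal_mul, ← fourierC_mul_fourierC_neg,
    ← sign_mul_intCast_eq_abs]
  linear_combination (n.sign : ℂ) * n * fourierC u n * fourierC u (-n) * Complex.I_sq

lemma hasSum_abs_pow_three_sub_abs_mul_norm_sq_fourierC (hu : ContDiff ℝ 3 u)
    (hper : Function.Periodic u (2 * π)) :
    HasSum (fun n : ℤ => (|(n : ℝ)| ^ 3 - |(n : ℝ)|) * ‖fourierC u n‖ ^ 2)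
      ((∫ x in (0:ℝ)..(2 * π), hilbertT u x * (deriv (deriv (deriv u)) x + deriv u x))
        / (2 * π)) := by
  have hu₀ : ContDiff ℝ 1 u := hu.of_le (by norm_num)
  have hu₁ : ContDiff ℝ 2 (deriv u) := ContDiff.deriv' hu
  have hu₂ : ContDiff ℝ 1 (deriv (deriv u)) := ContDiff.deriv' hu₁
  have hint₁ : IntervalIntegrable (deriv u) volume 0 (2 * π) :=
    hu₁.continuous.intervalIntegrable _ _
  have hint₃ : IntervalIntegrable (deriv (deriv (deriv u))) volume 0 (2 * π) :=
    hu₂.continuous_deriv_one.intervalIntegrable _ _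
  have hcoeff (n : ℤ) : fourierC (fun x => deriv (deriv (deriv u)) x + deriv u x) n =
      Complex.I * n * (1 - n ^ 2) * fourierC u n := by
    rw [fourierC_add hint₃ hint₁, fourierC_deriv hu₂ (periodic_deriv (periodic_deriv hper)),
      fourierC_deriv (hu₁.of_le one_le_two) (periodic_deriv hper), fourierC_deriv hu₀ hper]
    linear_combination Complex.I * n ^ 3 * fourierC u n * Complex.I_sq
  simp only [mul_comm (hilbertT u _)]
  rw [← Complex.hasSum_ofReal]
  convert! hasSum_integral_mul_hilbertT (hint₃.add hint₁) (summable_fourierC hu₀ hper) using 1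
  ext n
  have habs : ((|(n : ℝ)| ^ 3 - |(n : ℝ)| : ℝ) : ℂ) = n.sign * n * (n ^ 2 - 1) := by
    rw [sign_mul_intCast_eq_abs, ← Complex.ofReal_intCast n, ← Complex.ofReal_pow, ← sq_abs]
    push_cast
    ring
  rw [hcoeff, Complex.ofReal_mul, ← fourierC_mul_fourierC_neg, habs]
  push_cast
  linear_combination (n.sign : ℂ) * n * (n ^ 2 - 1) * fourierC u n * fourierC u (-n) * Complex.I_sq

lemma hasSum_seminorms (hu : ContDiff ℝ 3 u) (hper : Function.Periodic u (2 * π)) :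
    HasSum (fun n : ℤ => 8 * π ^ 2 * (|(n : ℝ)| ^ 3 + |(n : ℝ)|) * ‖fourierC u n‖ ^ 2)
      (8 * π * (∫ x in (0:ℝ)..(2 * π), u x * hilbertT (deriv u) x)
        + 4 * π * ∫ x in (0:ℝ)..(2 * π),
            hilbertT u x * (deriv (deriv (deriv u)) x + deriv u x)) := by
  convert! ((hasSum_abs_mul_norm_sq_fourierC (hu.of_le (by norm_num)) hper).mul_left
    (16 * π ^ 2)).add
    ((hasSum_abs_pow_three_sub_abs_mul_norm_sq_fourierC hu hper).mul_left (8 * π ^ 2)) using 1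
  · ext n
    ring
  · field_simp
    ring

lemma seminorms_nonneg (hu : ContDiff ℝ 3 u) (hper : Function.Periodic u (2 * π)) :
    0 ≤ 8 * π * (∫ x in (0:ℝ)..(2 * π), u x * hilbertT (deriv u) x)
      + 4 * π * ∫ x in (0:ℝ)..(2 * π),
          hilbertT u x * (deriv (deriv (deriv u)) x + deriv u x) :=
  (hasSum_seminorms hu hper).nonneg fun n => by positivity

lemma tsum_abs_pow_three_mul_norm_sq_fourierC_le (hu : ContDiff ℝ 3 u)
    (hper : Function.Periodic u (2 * π)) :
    ∑' n : ℤ, ENNReal.ofReal (16 * |(n : ℝ)| ^ 3 * ‖fourierC u n‖ ^ 2) ≤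
      ENNReal.ofReal (8 * π * (∫ x in (0:ℝ)..(2 * π), u x * hilbertT (deriv u) x)
        + 4 * π * ∫ x in (0:ℝ)..(2 * π),
            hilbertT u x * (deriv (deriv (deriv u)) x + deriv u x)) := by
  have hsum := hasSum_seminorms hu hper
  rw [← hsum.tsum_eq,
    ENNReal.ofReal_tsum_of_nonneg (fun n => by positivity) hsum.summable]
  refine ENNReal.tsum_le_tsum fun n => ENNReal.ofReal_le_ofReal ?_
  have hpi : 2 ≤ π ^ 2 := by nlinarith [pi_gt_three]
  gcongr ?_ * _
  calc 16 * |(n : ℝ)| ^ 3 = 8 * 2 * |(n : ℝ)| ^ 3 := by ring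
    _ ≤ 8 * π ^ 2 * (|(n : ℝ)| ^ 3 + |(n : ℝ)|) := by
      gcongr
      exact le_add_of_nonneg_right (abs_nonneg _)

end Seminorms

section TailWeight

/-- The weight `k⁻²` on the tail `|k| > |n|`, and `0` elsewhere: how much the `n`-th mode of `u`
contributes to the `k`-th mode of `G`. -/
noncomputable def tailWeight (n k : ℤ) : ℝ := if |n| < |k| then 1 / (k : ℝ) ^ 2 else 0

lemma tailWeight_nonneg (n k : ℤ) : 0 ≤ tailWeight n k := by
  unfold tailWeight
  positivity

lemma tailWeight_natAbs_natAbs (n k : ℤ) : tailWeight n.natAbs k.natAbs = tailWeight n k := by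
  simp [tailWeight]

lemma tsum_nat_tailWeight_le (N : ℕ) :
    ∑' j : ℕ, ENNReal.ofReal (tailWeight N j) ≤ ENNReal.ofReal (2 / (N + 1)) := by
  refine ENNReal.tsum_le_of_sum_range_le fun m => ?_
  rw [← ENNReal.ofReal_sum_of_nonneg fun (j : ℕ) _ => tailWeight_nonneg N j]
  refine ENNReal.ofReal_le_ofReal ?_
  have hfilter : {j ∈ Finset.range m | N < j} = Finset.Ioo N m := by
    ext j
    simp [and_comm]
  calc ∑ j ∈ Finset.range m, tailWeight N j
      = ∑ j ∈ Finset.Ioo N m, ((j : ℝ) ^ 2)⁻¹ := by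
        simp [tailWeight, ← hfilter, Finset.sum_filter]
    _ ≤ 2 / (N + 1) := sum_Ioo_inv_sq_le N m

lemma tsum_tailWeight_le (n : ℤ) :
    ∑' k : ℤ, ENNReal.ofReal (tailWeight n k) ≤ ENNReal.ofReal (4 / (|(n : ℝ)| + 1)) := by
  have hnat := tsum_nat_tailWeight_le n.natAbs
  have hneg (j : ℕ) : (-((j : ℤ) + 1)).natAbs = j + 1 := by omega
  calc ∑' k : ℤ, ENNReal.ofReal (tailWeight n k)
      = ∑' j : ℕ, ENNReal.ofReal (tailWeight n.natAbs j) +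
          ∑' j : ℕ, ENNReal.ofReal (tailWeight n.natAbs (j + 1 : ℕ)) := by
        simp only [← tailWeight_natAbs_natAbs n]
        rw [tsum_of_nat_of_neg_add_one ENNReal.summable ENNReal.summable]
        simp only [hneg, Int.natAbs_natCast]
    _ ≤ ENNReal.ofReal (2 / (n.natAbs + 1)) + ENNReal.ofReal (2 / (n.natAbs + 1)) :=
        add_le_add hnat ((ENNReal.tsum_comp_le_tsum_of_injective (add_left_injective 1)
          fun j : ℕ => ENNReal.ofReal (tailWeight n.natAbs j)).trans hnat)
    _ = ENNReal.ofReal (4 / (|(n : ℝ)| + 1)) := by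
        rw [← ENNReal.ofReal_add (by positivity) (by positivity), Nat.cast_natAbs, Int.cast_abs]
        ring_nf

lemma tsum_tsum_pow_four_mul_tailWeight_le (x : ℤ → ℝ) :
    ∑' (k : ℤ) (n : ℤ), ENNReal.ofReal (4 * (n : ℝ) ^ 4 * x n ^ 2 * tailWeight n k) ≤
      ∑' n : ℤ, ENNReal.ofReal (16 * |(n : ℝ)| ^ 3 * x n ^ 2) := by
  rw [ENNReal.tsum_comm]
  refine ENNReal.tsum_le_tsum fun n => ?_
  have hcoeff : 0 ≤ 4 * (n : ℝ) ^ 4 * x n ^ 2 := by positivity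
  calc ∑' k : ℤ, ENNReal.ofReal (4 * (n : ℝ) ^ 4 * x n ^ 2 * tailWeight n k)
      = ENNReal.ofReal (4 * (n : ℝ) ^ 4 * x n ^ 2) *
          ∑' k : ℤ, ENNReal.ofReal (tailWeight n k) := by
        simp only [ENNReal.ofReal_mul hcoeff, ENNReal.tsum_mul_left]
    _ ≤ ENNReal.ofReal (4 * (n : ℝ) ^ 4 * x n ^ 2) * ENNReal.ofReal (4 / (|(n : ℝ)| + 1)) := by
        gcongr
        exact tsum_tailWeight_le n
    _ ≤ ENNReal.ofReal (16 * |(n : ℝ)| ^ 3 * x n ^ 2) := by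
        rw [← ENNReal.ofReal_mul hcoeff]
        refine ENNReal.ofReal_le_ofReal ?_
        rw [← Even.pow_abs (by decide : Even 4), mul_div_assoc', div_le_iff₀ (by positivity)]
        have hcube : 0 ≤ 16 * |(n : ℝ)| ^ 3 * x n ^ 2 := by positivity
        linear_combination hcube

end TailWeight

section InteractionKernel

/-- The symbol through which the frequencies `m` and `n` of `u` produce the frequency `m + n` of
`2u′Hu′ − u″Hu″`, symmetrized in `m` and `n` (twice the symbol, up to a factor `i`). -/
def interactionKernel (m n : ℤ) : ℤ := (m.sign + n.sign) * (m * n * (2 + m * n))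

variable {m n : ℤ}

lemma interactionKernel_eq_zero (h : m * n ≤ 0) : interactionKernel m n = 0 := by
  rcases h.eq_or_lt with h | h
  · simp [interactionKernel, h]
  · rcases mul_neg_iff.mp h with ⟨hm, hn⟩ | ⟨hm, hn⟩ <;>
      simp [interactionKernel, Int.sign_eq_one_of_pos, Int.sign_eq_neg_one_of_neg, hm, hn]

lemma abs_interactionKernel_le (h : 0 < m * n) : |interactionKernel m n| ≤ 6 * (m * n) ^ 2 := by
  have hsign : |m.sign + n.sign| ≤ 2 := by
    rcases pos_and_pos_or_neg_and_neg_of_mul_pos h with ⟨hm, hn⟩ | ⟨hm, hn⟩ <;>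
      simp [Int.sign_eq_one_of_pos, Int.sign_eq_neg_one_of_neg, hm, hn]
  calc |interactionKernel m n| = |m.sign + n.sign| * (m * n * (2 + m * n)) := by
        rw [interactionKernel, abs_mul, abs_of_pos (by positivity : 0 < m * n * (2 + m * n))]
    _ ≤ 2 * (m * n * (3 * (m * n))) := by
        gcongr
        omega
    _ = 6 * (m * n) ^ 2 := by ring

lemma abs_lt_abs_add_of_mul_pos {R : Type*} [CommRing R] [LinearOrder R] [IsStrictOrderedRing R]
    {a b : R} (h : 0 < a * b) : |a| < |a + b| :=
  sq_lt_sq.mp (by nlinarith [sq_nonneg b])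

lemma abs_interactionKernel_mul_div_le (m n : ℤ) (x y : ℝ) :
    |(interactionKernel m n : ℝ)| * (|x| * |y|) / (((m + n : ℤ) : ℝ) ^ 2 - 1) ≤
      4 * (m : ℝ) ^ 4 * x ^ 2 * tailWeight m (m + n) +
        4 * (n : ℝ) ^ 4 * y ^ 2 * tailWeight n (m + n) := by
  rcases le_or_gt (m * n) 0 with hmn | hmn
  · rw [interactionKernel_eq_zero hmn, Int.cast_zero, abs_zero, zero_mul, zero_div]
    have := tailWeight_nonneg m (m + n)
    have := tailWeight_nonneg n (m + n)
    positivity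
  have hm : tailWeight m (m + n) = 1 / ((m + n : ℤ) : ℝ) ^ 2 :=
    if_pos (abs_lt_abs_add_of_mul_pos hmn)
  have hn : tailWeight n (m + n) = 1 / ((m + n : ℤ) : ℝ) ^ 2 :=
    if_pos (add_comm n m ▸ abs_lt_abs_add_of_mul_pos (mul_comm m n ▸ hmn))
  have hkernel : |(interactionKernel m n : ℝ)| ≤ 6 * (m * n : ℝ) ^ 2 := by
    exact_mod_cast abs_interactionKernel_le hmn
  have hfour : (4 : ℝ) ≤ ((m + n : ℤ) : ℝ) ^ 2 := by
    have : 4 ≤ (m + n) ^ 2 := by nlinarith [sq_nonneg (m - n)]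
    exact_mod_cast this
  rw [hm, hn]
  set s : ℝ := ((m + n : ℤ) : ℝ) ^ 2
  calc |(interactionKernel m n : ℝ)| * (|x| * |y|) / (s - 1)
      ≤ 6 * (m * n : ℝ) ^ 2 * (|x| * |y|) / (3 / 4 * s) := by
        gcongr
        linarith
    _ = 4 * (2 * |m ^ 2 * x| * |n ^ 2 * y|) / s := by
        simp only [abs_mul, abs_pow, sq_abs]
        ring
    _ ≤ 4 * (|m ^ 2 * x| ^ 2 + |n ^ 2 * y| ^ 2) / s := by
        gcongr
        exact two_mul_le_add_sq _ _
    _ = 4 * (m : ℝ) ^ 4 * x ^ 2 * (1 / s) + 4 * (n : ℝ) ^ 4 * y ^ 2 * (1 / s) := by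
        simp only [sq_abs]
        ring

end InteractionKernel

section QuadraticTerm

/-- The expression `2u′Hu′ − u″Hu″`, whose image under `H(1 + ∂²)⁻¹` is `G`. -/
noncomputable def quadraticTerm (u : ℝ → ℝ) (θ : ℝ) : ℝ :=
  2 * deriv u θ * hilbertT (deriv u) θ - deriv (deriv u) θ * hilbertT (deriv (deriv u)) θ

variable {u : ℝ → ℝ} {k : ℤ}

lemma hasSum_fourierC_quadraticTerm (hu : ContDiff ℝ 3 u) (hper : Function.Periodic u (2 * π))
    (k : ℤ) :
    HasSum (fun n : ℤ => Complex.I * (n.sign * ((k - n : ℤ) * n * (2 + (k - n : ℤ) * n))) *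
      (fourierC u (k - n) * fourierC u n)) (fourierC (quadraticTerm u) k) := by
  have hu₁ : ContDiff ℝ 2 (deriv u) := ContDiff.deriv' hu
  have hu₂ : ContDiff ℝ 1 (deriv (deriv u)) := ContDiff.deriv' hu₁
  have hsum₁ := summable_fourierC (hu₁.of_le one_le_two) (periodic_deriv hper)
  have hsum₂ := summable_fourierC hu₂ (periodic_deriv (periodic_deriv hper))
  have hcont₁ : Continuous fun θ => 2 * deriv u θ := continuous_const.mul hu₁.continuous
  have hcoeff₁ (n : ℤ) : fourierC (deriv u) n = Complex.I * n * fourierC u n :=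
    fourierC_deriv (hu.of_le (by norm_num)) hper n
  have hcoeff₂ (n : ℤ) : fourierC (deriv (deriv u)) n = -(n ^ 2) * fourierC u n := by
    rw [fourierC_deriv (hu₁.of_le one_le_two) (periodic_deriv hper), hcoeff₁]
    linear_combination n ^ 2 * fourierC u n * Complex.I_sq
  convert! (hasSum_fourierC_mul_hilbertT (hcont₁.intervalIntegrable _ _) hsum₁ k).sub
    (hasSum_fourierC_mul_hilbertT (hu₂.continuous.intervalIntegrable _ _) hsum₂ k) using 1
  · ext n
    rw [fourierC_const_mul, hcoeff₁, hcoeff₁, hcoeff₂, hcoeff₂]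
    push_cast
    linear_combination 2 * Complex.I * n.sign * n * (k - n) * fourierC u n *
      fourierC u (k - n) * Complex.I_sq
  · exact fourierC_sub ((hcont₁.mul (continuous_hilbertT hsum₁)).intervalIntegrable _ _)
      ((hu₂.continuous.mul (continuous_hilbertT hsum₂)).intervalIntegrable _ _) k

lemma norm_neg_I_mul_sign_div_one_sub_sq (hk : k ≠ 0) :
    ‖-Complex.I * ((k.sign : ℤ) : ℂ) / (1 - (k : ℂ) ^ 2)‖ = 1 / ((k : ℝ) ^ 2 - 1) := by
  have hnum : ‖-Complex.I * ((k.sign : ℤ) : ℂ)‖ = 1 := by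
    rcases hk.lt_or_gt with h | h <;>
      simp [Int.sign_eq_one_of_pos, Int.sign_eq_neg_one_of_neg, h]
  have hsq : (1 : ℝ) ≤ (k : ℝ) ^ 2 := by
    have : 0 < k ^ 2 := by positivity
    exact_mod_cast this
  have hden : 1 - (k : ℂ) ^ 2 = ((1 - (k : ℝ) ^ 2 : ℝ) : ℂ) := by push_cast; rfl
  rw [norm_div, hnum, hden, Complex.norm_real, Real.norm_eq_abs, abs_of_nonpos (by linarith),
    neg_sub]

lemma enorm_le_tsum_of_enorm_add_reflect_le {ι E : Type*} [AddCommGroup ι] [NormedAddCommGroup E]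
    [NormedSpace ℝ E] {f : ι → E} {z : E} {b : ι → ENNReal} (k : ι) (hf : HasSum f z)
    (hb : ∀ n, ‖f (k - n) + f n‖ₑ ≤ b (k - n) + b n) : ‖z‖ₑ ≤ ∑' n, b n := by
  have hsum : HasSum (fun n => f (k - n) + f n) ((2 : ℝ) • z) :=
    two_smul ℝ z ▸ ((Equiv.subLeft k).hasSum_iff.mpr hf).add hf
  have htwo : 2 * ‖z‖ₑ ≤ 2 * ∑' n, b n := calc
    2 * ‖z‖ₑ = ‖(2 : ℝ) • z‖ₑ := by
      rw [enorm_smul, Real.enorm_of_nonneg zero_le_two, ENNReal.ofReal_ofNat]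
    _ ≤ ∑' n, ‖f (k - n) + f n‖ₑ := hsum.tsum_eq ▸ enorm_tsum_le_tsum_enorm
    _ ≤ ∑' n, (b (k - n) + b n) := ENNReal.tsum_le_tsum hb
    _ = 2 * ∑' n, b n := by
      rw [ENNReal.tsum_add, two_mul]
      congr 1
      exact (Equiv.subLeft k).tsum_eq b
  exact (ENNReal.mul_le_mul_iff_right two_ne_zero ENNReal.ofNat_ne_top).mp htwo

lemma enorm_multiplier_mul_fourierC_quadraticTerm_le (hu : ContDiff ℝ 3 u)
    (hper : Function.Periodic u (2 * π)) (hk : k ≠ 0) :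
    ‖-Complex.I * ((k.sign : ℤ) : ℂ) / (1 - (k : ℂ) ^ 2) * fourierC (quadraticTerm u) k‖ₑ ≤
      ∑' n : ℤ, ENNReal.ofReal (4 * (n : ℝ) ^ 4 * ‖fourierC u n‖ ^ 2 * tailWeight n k) := by
  refine enorm_le_tsum_of_enorm_add_reflect_le k
    ((hasSum_fourierC_quadraticTerm hu hper k).mul_left _) fun n => ?_
  obtain ⟨m, rfl⟩ : ∃ m, k = m + n := ⟨k - n, by ring⟩
  have hterm (a b : ℤ) : 0 ≤ 4 * (a : ℝ) ^ 4 * ‖fourierC u a‖ ^ 2 * tailWeight a b := by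
    have := tailWeight_nonneg a b
    positivity
  simp only [add_sub_cancel_right, add_sub_cancel_left]
  rw [← ENNReal.ofReal_add (hterm _ _) (hterm _ _), ← mul_add, ← ofReal_norm]
  refine ENNReal.ofReal_le_ofReal
    (le_of_eq_of_le ?_ (abs_interactionKernel_mul_div_le m n ‖fourierC u m‖ ‖fourierC u n‖))
  have hkernel : Complex.I * (m.sign * (n * m * (2 + n * m))) * (fourierC u n * fourierC u m) +
      Complex.I * (n.sign * (m * n * (2 + m * n))) * (fourierC u m * fourierC u n) =
      Complex.I * ((interactionKernel m n : ℝ) : ℂ) * (fourierC u m * fourierC u n) := by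
    rw [interactionKernel]
    push_cast
    ring
  rw [hkernel, norm_mul, norm_neg_I_mul_sign_div_one_sub_sq hk, norm_mul, norm_mul, norm_mul,
    Complex.norm_I, Complex.norm_real, Real.norm_eq_abs, abs_norm, abs_norm]
  ring

end QuadraticTerm

theorem G_bound_general (u : ℝ → ℝ)
    (hu : ContDiff ℝ 3 u)
    (hper : ∀ θ : ℝ, u (θ + 2 * π) = u θ)
    (G : ℝ → ℝ) (hGcont : Continuous G) (hGper : ∀ θ : ℝ, G (θ + 2 * π) = G θ)
    (hGcoef : ∀ k : ℤ, 2 ≤ k.natAbs →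
      fourierC G k = (-Complex.I * ((k.sign : ℤ) : ℂ)) / (1 - (k : ℂ) ^ 2) *
        fourierC (fun θ => 2 * deriv u θ * hilbertT (deriv u) θ
          - deriv (deriv u) θ * hilbertT (deriv (deriv u)) θ) k)
    (hGlow : ∀ k : ℤ, k.natAbs ≤ 1 → fourierC G k = 0) :
    ∀ θ : ℝ, |G θ| ≤
      8 * π * (∫ x in (0:ℝ)..(2 * π), u x * hilbertT (deriv u) x)
      + 4 * π * ∫ x in (0:ℝ)..(2 * π),
          hilbertT u x * (deriv (deriv (deriv u)) x + deriv u x) := by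
  intro θ
  have hmode (k : ℤ) : ‖fourierC G k‖ₑ ≤
      ∑' n : ℤ, ENNReal.ofReal (4 * (n : ℝ) ^ 4 * ‖fourierC u n‖ ^ 2 * tailWeight n k) := by
    rcases le_or_gt 2 k.natAbs with hk | hk
    · rw [hGcoef k hk]
      exact enorm_multiplier_mul_fourierC_quadraticTerm_le hu hper (by omega)
    · simp [hGlow k (by omega)]
  rw [← Real.norm_eq_abs, ← ENNReal.ofReal_le_ofReal_iff (seminorms_nonneg hu hper), ofReal_norm]
  calc ‖G θ‖ₑ ≤ ∑' k, ‖fourierC G k‖ₑ := enorm_le_tsum_enorm_fourierC hGcont hGper θ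
    _ ≤ ∑' (k : ℤ) (n : ℤ),
        ENNReal.ofReal (4 * (n : ℝ) ^ 4 * ‖fourierC u n‖ ^ 2 * tailWeight n k) :=
      ENNReal.tsum_le_tsum hmode
    _ ≤ ∑' n : ℤ, ENNReal.ofReal (16 * |(n : ℝ)| ^ 3 * ‖fourierC u n‖ ^ 2) :=
      tsum_tsum_pow_four_mul_tailWeight_le fun n => ‖fourierC u n‖
    _ ≤ _ := tsum_abs_pow_three_mul_norm_sq_fourierC_le hu hper

/-- Bound for `G = H (1+∂²_θ)⁻¹[2 u′ H u′ − u″ H u″]`: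
`sup_θ |G| ≤ 8π ‖u‖²_{Ḣ^{1/2}} + 4π ‖u‖²_{Ḣ^{3/2}}`.  The function `G` is characterized by
its Fourier coefficients. -/
theorem G_bound (u : ℝ → ℝ)
    (hu : ContDiff ℝ (⊤ : ℕ∞) u)
    (hper : ∀ θ : ℝ, u (θ + 2 * π) = u θ)
    (hmodes : ∀ n : ℤ, n.natAbs ≤ 1 → fourierC u n = 0)
    (G : ℝ → ℝ) (hGcont : Continuous G) (hGper : ∀ θ : ℝ, G (θ + 2 * π) = G θ)
    (hGcoef : ∀ k : ℤ, 2 ≤ k.natAbs →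
      fourierC G k = (-Complex.I * ((k.sign : ℤ) : ℂ)) / (1 - (k : ℂ) ^ 2) *
        fourierC (fun θ => 2 * deriv u θ * hilbertT (deriv u) θ
          - deriv (deriv u) θ * hilbertT (deriv (deriv u)) θ) k)
    (hGlow : ∀ k : ℤ, k.natAbs ≤ 1 → fourierC G k = 0) :
    ∀ θ : ℝ, |G θ| ≤
      8 * π * (∫ x in (0:ℝ)..(2 * π), u x * hilbertT (deriv u) x)
      + 4 * π * ∫ x in (0:ℝ)..(2 * π),
          hilbertT u x * (deriv (deriv (deriv u)) x + deriv u x) := by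
  exact G_bound_general u (contDiff_infty.mp hu 3) hper G hGcont hGper hGcoef hGlow
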